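/- arXiv:math/0603483 — 3 statements merged into one kernel-verified Lean document; each statement's English description precedes it below -/
import Mathlib

section
/- Let 𝓗 be a Hilbert space and let φ : SL(2,ℝ) → U(𝓗) be a continuous unitary representation, i.e. a group homomorphism into the group of unitary automorphisms of 𝓗 such that for every v ∈ 𝓗 the map g ↦ φ(g)v is continuous. If a vector v ∈ 𝓗 satisfies φ(u)v = v for every u in the upper unipotent subgroup U = {[[1,t],[0,1]] : t ∈ ℝ}, then φ(g)v = v for every g ∈ SL(2,ℝ). -/
open Matrix

/-- `SL(2,ℝ)`. -/
abbrev SL2R := Matrix.SpecialLinearGroup (Fin 2) ℝ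

/-- The standard topology on `SL(2,ℝ)`, as a subspace of the 2×2 real matrices. -/
noncomputable instance : TopologicalSpace SL2R := instTopologicalSpaceSubtype

/-- The upper unipotent element `[[1, t], [0, 1]]` of `SL(2,ℝ)`. -/
def upperUnipotent (t : ℝ) : SL2R :=
  ⟨!![1, t; 0, 1], by simp [Matrix.det_fin_two_of]⟩

/-- lower triangular element -/
noncomputable def lowTri (a : ℝ) (ha : a ≠ 0) (c : ℝ) : SL2R :=
  ⟨!![a, 0; c, a⁻¹], by simp [Matrix.det_fin_two_of, ha]⟩

theorem lowTri_cont (a : ℝ) (ha : a ≠ 0) : Continuous (lowTri a ha) := by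
  refine Continuous.subtype_mk ?_ _
  refine continuous_matrix ?_
  intro i j
  fin_cases i <;> fin_cases j <;> simp <;> fun_prop

theorem lowTri_one : lowTri 1 one_ne_zero 0 = 1 := by
  ext i j
  fin_cases i <;> fin_cases j <;> simp [lowTri]

theorem decomp_ne (g : SL2R) (hc : g.1 1 0 ≠ 0) :
    g = upperUnipotent ((g.1 0 0 - 1) / g.1 1 0) * lowTri 1 one_ne_zero (g.1 1 0)
      * upperUnipotent ((g.1 1 1 - 1) / g.1 1 0) := by
  have hd := g.2
  rw [Matrix.det_fin_two] at hd
  ext i j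
  simp only [Matrix.SpecialLinearGroup.coe_mul, Matrix.mul_apply, Fin.sum_univ_two]
  fin_cases i <;> fin_cases j <;>
    simp [lowTri, upperUnipotent, hc]
  all_goals
    field_simp
    linarith

theorem decomp_eq (g : SL2R) (hc : g.1 1 0 = 0) (ha : g.1 0 0 ≠ 0) :
    g = lowTri (g.1 0 0) ha 0 * upperUnipotent (g.1 0 1 / g.1 0 0) := by
  have hd := g.2
  rw [Matrix.det_fin_two, hc] at hd
  ext i j
  simp only [Matrix.SpecialLinearGroup.coe_mul, Matrix.mul_apply, Fin.sum_univ_two]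
  fin_cases i <;> fin_cases j <;>
    simp [lowTri, upperUnipotent, hc]
  all_goals
    field_simp
    try linarith

theorem lowTri_conj (a : ℝ) (ha : a ≠ 0) (c : ℝ) :
    lowTri a ha 0 * lowTri 1 one_ne_zero (a ^ 2 * c) * lowTri a⁻¹ (inv_ne_zero ha) 0
      = lowTri 1 one_ne_zero c := by
  ext i j
  simp only [Matrix.SpecialLinearGroup.coe_mul, Matrix.mul_apply, Fin.sum_univ_two]
  fin_cases i <;> fin_cases j <;>
    simp [lowTri, ha]
  field_simp

/-- **Mautner phenomenon for `SL(2,ℝ)`.**  If `φ` is a continuous unitary representation of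
`SL(2,ℝ)` on a Hilbert space `𝓗` and `v ∈ 𝓗` is fixed by the upper unipotent subgroup
`U = {[[1,t],[0,1]] : t ∈ ℝ}`, then `v` is fixed by all of `SL(2,ℝ)`. -/
theorem mautner_SL2R
    {𝕜 : Type*} [RCLike 𝕜] {𝓗 : Type*} [NormedAddCommGroup 𝓗]
    [InnerProductSpace 𝕜 𝓗] [CompleteSpace 𝓗]
    (φ : SL2R →* (𝓗 ≃ₗᵢ[𝕜] 𝓗))
    (hφ : ∀ v : 𝓗, Continuous fun g : SL2R => φ g v)
    (v : 𝓗) (hv : ∀ t : ℝ, φ (upperUnipotent t) v = v) :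
    ∀ g : SL2R, φ g v = v := by
  have hinv : ∀ s g t : SL2R, φ s v = v → φ t v = v →
      ‖φ (s * g * t) v - v‖ = ‖φ g v - v‖ := by
    intro s g t hs ht
    have h1 : φ (s * g * t) v - v = φ s (φ g v - v) := by
      rw [map_sub, hs, map_mul, map_mul]
      simp [ht]
    rw [h1, LinearIsometryEquiv.norm_map]
  have hcont : Continuous fun g : SL2R => ‖φ g v - v‖ := ((hφ v).sub continuous_const).norm
  have hlim : ∀ (a : ℝ) (ha : a ≠ 0), Filter.Tendsto (fun c : ℝ => ‖φ (lowTri a ha c) v - v‖)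
      (nhdsWithin 0 {0}ᶜ) (nhds ‖φ (lowTri a ha 0) v - v‖) := fun a ha =>
    ((hcont.comp (lowTri_cont a ha)).tendsto 0).mono_left nhdsWithin_le_nhds
  have h1 := hlim 1 one_ne_zero
  rw [lowTri_one] at h1
  simp only [map_one, LinearIsometryEquiv.coe_one, id, sub_self, norm_zero] at h1
  have hA : ∀ (a : ℝ) (ha : a ≠ 0), φ (lowTri a ha 0) v = v := by
    intro a ha
    have h2 : Filter.Tendsto (fun c : ℝ => ‖φ (lowTri a ha c) v - v‖)
        (nhdsWithin 0 {0}ᶜ) (nhds 0) := by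
      refine h1.congr' ?_
      filter_upwards [self_mem_nhdsWithin] with c hc
      have hc' : c ≠ 0 := hc
      rw [decomp_ne (lowTri a ha c) (by simpa [lowTri] using hc'),
        hinv _ _ _ (hv _) (hv _)]
      simp [lowTri]
    have h3 := tendsto_nhds_unique (hlim a ha) h2
    exact sub_eq_zero.1 (norm_eq_zero.1 h3)
  have hL : ∀ c : ℝ, φ (lowTri 1 one_ne_zero c) v = v := by
    intro c
    have h2 : Filter.Tendsto (fun a : ℝ => ‖φ (lowTri 1 one_ne_zero (a ^ 2 * c)) v - v‖)
        (nhdsWithin 0 {0}ᶜ) (nhds 0) := by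
      have h4 : Continuous fun a : ℝ => ‖φ (lowTri 1 one_ne_zero (a ^ 2 * c)) v - v‖ :=
        hcont.comp ((lowTri_cont 1 one_ne_zero).comp (by fun_prop))
      have h5 := (h4.tendsto 0).mono_left (nhdsWithin_le_nhds (s := {0}ᶜ))
      simpa [lowTri_one] using h5
    have h3 : Filter.Tendsto (fun _ : ℝ => ‖φ (lowTri 1 one_ne_zero c) v - v‖)
        (nhdsWithin 0 {0}ᶜ) (nhds 0) := by
      refine h2.congr' ?_
      filter_upwards [self_mem_nhdsWithin] with a ha'
      have ha : a ≠ 0 := ha'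
      rw [← lowTri_conj a ha c, hinv _ _ _ (hA _ _) (hA _ _)]
    have h6 := tendsto_nhds_unique tendsto_const_nhds h3
    exact sub_eq_zero.1 (norm_eq_zero.1 h6)
  intro g
  by_cases hc : g.1 1 0 = 0
  · have ha : g.1 0 0 ≠ 0 := by
      intro h0
      have hd := g.2
      rw [Matrix.det_fin_two, hc, h0] at hd
      simp at hd
    rw [decomp_eq g hc ha, map_mul]
    simp [hv, hA]
  · rw [decomp_ne g hc, map_mul, map_mul]
    simp [hv, hL]
end

section
/- Let 𝓗 be a Hilbert space and let φ : SL(2,ℝ) → U(𝓗) be a continuous unitary representation (a homomorphism into the unitary group such that g ↦ φ(g)v is continuous for each v). If a vector v ∈ 𝓗 satisfies φ(u)v = v for every u in the upper unipotent subgroup U = {[[1,t],[0,1]] : t ∈ ℝ}, then v is also fixed by the diagonal subgroup: φ(diag(e^t, e^{-t}))v = v for all t ∈ ℝ. -/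
open Matrix

/-- The diagonal element `diag(e^t, e^{-t})` of `SL(2,ℝ)`. -/
noncomputable def diagExp (t : ℝ) : SL2R :=
  ⟨!![Real.exp t, 0; 0, Real.exp (-t)], by
    simp [Matrix.det_fin_two_of, ← Real.exp_add]⟩

/-- `[[e^a, 0], [x, e^{-a}]]`. -/
noncomputable def lowerTri (a x : ℝ) : SL2R :=
  ⟨!![Real.exp a, 0; x, Real.exp (-a)], by
    simp [Matrix.det_fin_two_of, ← Real.exp_add]⟩

lemma lowerTri_continuous (a : ℝ) : Continuous (lowerTri a) := by
  refine Continuous.subtype_mk ?_ _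
  refine continuous_matrix ?_
  intro i j
  fin_cases i <;> fin_cases j <;> simp <;> fun_prop

lemma lowerTri_eq (a x : ℝ) (hx : x ≠ 0) :
    lowerTri a x = upperUnipotent ((Real.exp a - 1) / x) * lowerTri 0 x *
      upperUnipotent ((Real.exp (-a) - 1) / x) := by
  have h : Real.exp a * Real.exp (-a) = 1 := by simp [← Real.exp_add]
  apply Subtype.ext
  rw [Matrix.SpecialLinearGroup.coe_mul, Matrix.SpecialLinearGroup.coe_mul]
  ext i j
  fin_cases i <;> fin_cases j <;>
    simp [lowerTri, upperUnipotent, Matrix.mul_apply, Fin.sum_univ_two] <;>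
    field_simp <;> linarith

/-- If `φ` is a continuous unitary representation of `SL(2,ℝ)` on a Hilbert space `𝓗`
and `v ∈ 𝓗` is fixed by the upper unipotent subgroup `U = {[[1,t],[0,1]] : t ∈ ℝ}`,
then `v` is also fixed by the diagonal subgroup `{diag(e^t, e^{-t}) : t ∈ ℝ}`. -/
theorem mautner_diagonal_SL2R
    {𝕜 : Type*} [RCLike 𝕜] {𝓗 : Type*} [NormedAddCommGroup 𝓗]
    [InnerProductSpace 𝕜 𝓗] [CompleteSpace 𝓗]
    (φ : SL2R →* (𝓗 ≃ₗᵢ[𝕜] 𝓗))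
    (hφ : ∀ v : 𝓗, Continuous fun g : SL2R => φ g v)
    (v : 𝓗) (hv : ∀ t : ℝ, φ (upperUnipotent t) v = v) :
    ∀ t : ℝ, φ (diagExp t) v = v := by
  intro a
  have key : (fun x : ℝ => ‖φ (lowerTri a x) v - v‖) = fun x => ‖φ (lowerTri 0 x) v - v‖ := by
    refine Continuous.ext_on (dense_compl_singleton (0 : ℝ)) ?_ ?_ ?_
    · exact (((hφ v).comp (lowerTri_continuous a)).sub continuous_const).norm
    · exact (((hφ v).comp (lowerTri_continuous 0)).sub continuous_const).norm
    · intro x hx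
      have hx : x ≠ 0 := hx
      simp only
      have e : φ (lowerTri a x) v =
          φ (upperUnipotent ((Real.exp a - 1) / x)) (φ (lowerTri 0 x) v) := by
        conv_rhs => rw [← hv ((Real.exp (-a) - 1) / x)]
        rw [lowerTri_eq a x hx, map_mul, map_mul]
        rfl
      rw [e, ← (φ (upperUnipotent ((Real.exp a - 1) / x))).norm_map (φ (lowerTri 0 x) v - v),
        map_sub, hv]
  have h0 := congrFun key 0
  have e1 : lowerTri a 0 = diagExp a := rfl
  have e2 : lowerTri 0 0 = 1 := by
    apply Subtype.ext
    ext i j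
    fin_cases i <;> fin_cases j <;> simp [lowerTri]
  simp only [e1, e2, map_one] at h0
  rw [show (1 : 𝓗 ≃ₗᵢ[𝕜] 𝓗) v = v from rfl, sub_self, norm_zero, norm_eq_zero, sub_eq_zero] at h0
  exact h0
end

section
/- For every integer n ≥ 1 there exists a constant c > 0 depending only on n such that for every real polynomial q(s) = a₀ + a₁s + ⋯ + a_n s^n with max_{0≤i≤n} |a_i| ≥ 1, the Lebesgue measure of the set {s ∈ [0,1] : |q(s)| ≥ c} is at least 0.9. -/
open MeasureTheory

lemma aux_null (n : ℕ) (b : Fin (n+1) → ℝ) (hb : b ≠ 0) :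
    volume {s : ℝ | ∑ i, b i * s ^ (i:ℕ) = 0} = 0 := by
  apply Set.Finite.measure_zero
  have hp : (∑ i, Polynomial.C (b i) * Polynomial.X ^ (i:ℕ) : Polynomial ℝ) ≠ 0 := by
    intro h
    apply hb
    funext j
    have := congrArg (fun p => Polynomial.coeff p (j:ℕ)) h
    simpa [Polynomial.finsetSum_coeff, Polynomial.coeff_C_mul, Polynomial.coeff_X_pow,
      Fin.val_inj] using this
  refine (Polynomial.finite_setOf_isRoot hp).subset ?_
  intro s hs
  simpa [Polynomial.IsRoot, Polynomial.eval_finset_sum] using hs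

lemma aux_pt (n : ℕ) (b : Fin (n+1) → ℝ) (hb : b ≠ 0) :
    ∃ c > (0:ℝ), (9 / 10 : ENNReal) ≤
        volume {s : ℝ | s ∈ Set.Icc (0 : ℝ) 1 ∧ c ≤ |∑ i, b i * s ^ (i:ℕ)|} := by
  set S : ℕ → Set ℝ := fun k =>
    {s : ℝ | s ∈ Set.Icc (0 : ℝ) 1 ∧ 1 / ((k:ℝ) + 1) ≤ |∑ i, b i * s ^ (i:ℕ)|} with hS
  have hm : Monotone S := by
    intro k l hkl s hs
    exact ⟨hs.1, (one_div_le_one_div_of_le (by positivity) (by gcongr)).trans hs.2⟩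
  have hU : 1 ≤ volume (⋃ k, S k) := by
    have hsub : Set.Icc (0:ℝ) 1 ⊆ (⋃ k, S k) ∪ {s : ℝ | ∑ i, b i * s ^ (i:ℕ) = 0} := by
      intro s hs
      by_cases h0 : ∑ i, b i * s ^ (i:ℕ) = 0
      · exact Or.inr h0
      · obtain ⟨k, hk⟩ := exists_nat_one_div_lt (abs_pos.mpr h0)
        exact Or.inl (Set.mem_iUnion.mpr ⟨k, hs, hk.le⟩)
    have h := (measure_mono (μ := volume) hsub).trans (measure_union_le _ _)
    rw [aux_null n b hb] at h
    simpa using h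
  have ht := tendsto_measure_iUnion_atTop (μ := volume) hm
  have hlt : (9/10 : ENNReal) < volume (⋃ k, S k) := by
    refine lt_of_lt_of_le ?_ hU
    rw [ENNReal.div_lt_iff (by simp) (by simp)]
    norm_num
  obtain ⟨k, hk⟩ := (ht.eventually (lt_mem_nhds hlt)).exists
  exact ⟨1 / ((k:ℝ)+1), by positivity, hk.le⟩

lemma aux_sphere (n : ℕ) : ∃ c > (0:ℝ), ∀ b ∈ Metric.sphere (0 : Fin (n+1) → ℝ) 1,
    (9 / 10 : ENNReal) ≤
        volume {s : ℝ | s ∈ Set.Icc (0 : ℝ) 1 ∧ c ≤ |∑ i, b i * s ^ (i:ℕ)|} := by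
  refine (isCompact_sphere (0 : Fin (n+1) → ℝ) 1).induction_on
    (p := fun T => ∃ c > (0:ℝ), ∀ b ∈ T, (9 / 10 : ENNReal) ≤
        volume {s : ℝ | s ∈ Set.Icc (0 : ℝ) 1 ∧ c ≤ |∑ i, b i * s ^ (i:ℕ)|}) ?_ ?_ ?_ ?_
  · exact ⟨1, one_pos, by simp⟩
  · rintro s t hst ⟨c, hc, h⟩
    exact ⟨c, hc, fun b hb => h b (hst hb)⟩
  · rintro s t ⟨c, hc, h⟩ ⟨d, hd, h'⟩
    refine ⟨min c d, lt_min hc hd, ?_⟩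
    rintro b (hb | hb)
    · exact (h b hb).trans (measure_mono fun x hx => ⟨hx.1, (min_le_left _ _).trans hx.2⟩)
    · exact (h' b hb).trans (measure_mono fun x hx => ⟨hx.1, (min_le_right _ _).trans hx.2⟩)
  · intro a ha
    have ha0 : a ≠ 0 := by
      rintro rfl
      simp at ha
    obtain ⟨c, hc, h⟩ := aux_pt n a ha0
    refine ⟨Metric.ball a (c / 2 / (n+1)), mem_nhdsWithin_of_mem_nhds
      (Metric.ball_mem_nhds _ (by positivity)), c / 2, by positivity, ?_⟩
    intro b hb
    refine h.trans (measure_mono ?_)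
    rintro s ⟨hs, hs'⟩
    refine ⟨hs, ?_⟩
    have hd : |∑ i, a i * s ^ (i:ℕ) - ∑ i, b i * s ^ (i:ℕ)| ≤ c / 2 := by
      rw [← Finset.sum_sub_distrib]
      refine (Finset.abs_sum_le_sum_abs _ _).trans ?_
      have : ∀ i ∈ (Finset.univ : Finset (Fin (n+1))),
          |a i * s ^ (i:ℕ) - b i * s ^ (i:ℕ)| ≤ c / 2 / (n+1) := by
        intro i _
        rw [← sub_mul, abs_mul, abs_of_nonneg (pow_nonneg hs.1 _)]
        have h1 : s ^ (i:ℕ) ≤ 1 := pow_le_one₀ hs.1 hs.2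
        have h2 : |a i - b i| ≤ c / 2 / (n+1) := by
          have := dist_le_pi_dist a b i
          rw [Real.dist_eq] at this
          rw [Metric.mem_ball'] at hb
          exact this.trans hb.le
        exact (mul_le_of_le_one_right (abs_nonneg _) h1).trans h2
      refine (Finset.sum_le_sum this).trans (le_of_eq ?_)
      simp
      field_simp
    have := abs_sub_abs_le_abs_sub (∑ i, a i * s ^ (i:ℕ)) (∑ i, b i * s ^ (i:ℕ))
    linarith

/-- For every `n ≥ 1` there is a constant `c > 0`, depending only on `n`, such that every
real polynomial `q(s) = a₀ + a₁ s + ⋯ + a_n s^n` with some coefficient of absolute value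
at least `1` satisfies `|q(s)| ≥ c` on a subset of `[0,1]` of Lebesgue measure at
least `0.9`. -/
theorem polynomial_large_on_most_of_unit_interval (n : ℕ) (hn : 1 ≤ n) :
    ∃ c > (0 : ℝ), ∀ a : ℕ → ℝ, (∃ i ≤ n, 1 ≤ |a i|) →
      (9 / 10 : ENNReal) ≤
        volume {s : ℝ | s ∈ Set.Icc (0 : ℝ) 1 ∧
          c ≤ |∑ i ∈ Finset.range (n + 1), a i * s ^ i|} := by
  obtain ⟨c, hc, h⟩ := aux_sphere n
  refine ⟨c, hc, ?_⟩
  rintro a ⟨i, hi, hai⟩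
  set b : Fin (n+1) → ℝ := fun j => a j with hb
  have hM : 1 ≤ ‖b‖ := by
    have := norm_le_pi_norm b ⟨i, by omega⟩
    rw [Real.norm_eq_abs] at this
    exact hai.trans this
  have hM0 : 0 < ‖b‖ := by linarith
  refine (h (‖b‖⁻¹ • b) (by simp [norm_smul, hM0.ne'])).trans (measure_mono ?_)
  rintro s ⟨hs, hs'⟩
  refine ⟨hs, hs'.trans ?_⟩
  rw [Finset.sum_range]
  have : ∑ j, (‖b‖⁻¹ • b) j * s ^ (j:ℕ) = ‖b‖⁻¹ * ∑ j : Fin (n+1), a j * s ^ (j:ℕ) := by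
    rw [Finset.mul_sum]
    exact Finset.sum_congr rfl fun j _ => by simp [hb, mul_assoc]
  rw [this, abs_mul, abs_of_pos (inv_pos.mpr hM0)]
  exact mul_le_of_le_one_left (abs_nonneg _) (inv_le_one_of_one_le₀ hM)
end
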